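/- Let γ(t) = (t,t²,t³) and let T : ℝ³ → ℝ³ be the linear map T(x,y,z) = (y/2, (x − z/6)/√2, (x + z/6)/√2). Let t ∈ [0,1] and define ω ∈ [π/4, π/2] by (cos ω, sin ω) = (2√2 t/(2 + t²), (2 − t²)/(2 + t²)), and set u = (cos ω, sin ω, 1), v = (sin ω, −cos ω, 0), w = (cos ω, sin ω, −1). Then for all 0 < a ≤ b and B₀, C₀ > 0 with B₀ + C₀ ≤ a/8, the image under T of the set {A γ'(t) + B γ''(t) + C γ'''(t) : a ≤ |A| ≤ b, |B| ≤ B₀, |C| ≤ C₀} is contained in {A' u + B' v + C' w : a/2 ≤ |A'| ≤ 2b, |B'| ≤ B₀ + C₀, |C'| ≤ C₀}. -/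

import Mathlib

open Real Set

noncomputable section

/-- `γ'(t) = (1, 2t, 3t²)`. -/
def momD1 (t : ℝ) : Fin 3 → ℝ := ![1, 2*t, 3*t^2]

/-- `γ''(t) = (0, 2, 6t)`. -/
def momD2 (t : ℝ) : Fin 3 → ℝ := ![0, 2, 6*t]

/-- `γ'''(t) = (0, 0, 6)`. -/
def momD3 : Fin 3 → ℝ := ![0, 0, 6]

/-- The linear map `T(x,y,z) = (y/2, (x − z/6)/√2, (x + z/6)/√2)`. -/
def Tmap (x : Fin 3 → ℝ) : Fin 3 → ℝ :=
  ![x 1 / 2, (x 0 - x 2 / 6) / Real.sqrt 2, (x 0 + x 2 / 6) / Real.sqrt 2]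

/-- **(From the proof of Proposition 2.12.)** The image under `T` of a moment-curve frame
box is contained in a box in the cone frame `(u,v,w)` at angle `ω`. -/
theorem moment_frame_to_cone_frame
    (t : ℝ) (ht : t ∈ Set.Icc (0:ℝ) 1)
    (ω : ℝ) (hω : ω ∈ Set.Icc (π/4) (π/2))
    (hcos : Real.cos ω = 2 * Real.sqrt 2 * t / (2 + t^2))
    (hsin : Real.sin ω = (2 - t^2) / (2 + t^2))
    (a b B₀ C₀ : ℝ) (ha : 0 < a) (hab : a ≤ b) (hB₀ : 0 < B₀) (hC₀ : 0 < C₀)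
    (hsum : B₀ + C₀ ≤ a / 8) :
    Tmap '' {ξ | ∃ A B C : ℝ, a ≤ |A| ∧ |A| ≤ b ∧ |B| ≤ B₀ ∧ |C| ≤ C₀ ∧
                 ξ = A • momD1 t + B • momD2 t + C • momD3} ⊆
      {ξ | ∃ A' B' C' : ℝ, a/2 ≤ |A'| ∧ |A'| ≤ 2*b ∧ |B'| ≤ B₀ + C₀ ∧ |C'| ≤ C₀ ∧
           ξ = A' • ![Real.cos ω, Real.sin ω, 1] + B' • ![Real.sin ω, -Real.cos ω, 0]
               + C' • ![Real.cos ω, Real.sin ω, -1]} := by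
  obtain ⟨ht0, ht1⟩ := ht
  rintro _ ⟨_, ⟨A, B, C, hA1, hA2, hB, hC, rfl⟩, rfl⟩
  have hr2 : Real.sqrt 2 * Real.sqrt 2 = 2 := Real.mul_self_sqrt (by norm_num)
  have hr0 : 0 < Real.sqrt 2 := Real.sqrt_pos.mpr (by norm_num)
  rw [hcos, hsin]
  simp only [Tmap, momD1, momD2, momD3]
  generalize Real.sqrt 2 = r at *
  have hr1 : 1.4 ≤ r := by nlinarith
  have hr3 : r ≤ 1.5 := by nlinarith
  have hd : 0 < 2 + t^2 := by positivity
  have ht2 : t^2 ≤ 1 := by nlinarith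
  have habs : ∀ x c : ℝ, 0 ≤ c → c ≤ 1 → |x * c| ≤ |x| := by
    intro x c h0 h1
    rw [abs_mul, abs_of_nonneg h0]
    exact mul_le_of_le_one_right (abs_nonneg x) h1
  have hBt := habs B t ht0 ht1
  have hCk := habs C (t^2/(2+t^2)) (by positivity) (by rw [div_le_one hd]; linarith)
  have hCm := habs C (2*t/(2+t^2)) (by positivity) (by rw [div_le_one hd]; nlinarith)
  have hCn := habs C (r/(2+t^2)) (by positivity) (by rw [div_le_one hd]; nlinarith)
  have hAl : |A * ((2+t^2)/2)| = |A| * ((2+t^2)/2) := by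
    rw [abs_mul, abs_of_pos (by positivity : 0 < (2+t^2)/2)]
  have hAl1 : |A| ≤ |A| * ((2+t^2)/2) := by nlinarith [abs_nonneg A, sq_nonneg t]
  have hAl2 : |A| * ((2+t^2)/2) ≤ |A| * 1.5 := by
    apply mul_le_mul_of_nonneg_left _ (abs_nonneg A); linarith
  have hX1 : |A * ((2+t^2)/2)| - |B * t| - |C * (t^2/(2+t^2))|
      ≤ |A * ((2+t^2)/2) + B * t + C * (t^2/(2+t^2))| := by
    have h1 := abs_sub_abs_le_abs_sub (A * ((2+t^2)/2)) (-(B * t + C * (t^2/(2+t^2))))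
    have h2 := abs_add_le (B * t) (C * (t^2/(2+t^2)))
    rw [abs_neg, sub_neg_eq_add, ← add_assoc] at h1
    linarith
  have hX2 := abs_add_three (A * ((2+t^2)/2)) (B * t) (C * (t^2/(2+t^2)))
  have hrX : |r/2 * (A * ((2+t^2)/2) + B * t + C * (t^2/(2+t^2)))|
      = r/2 * |A * ((2+t^2)/2) + B * t + C * (t^2/(2+t^2))| := by
    rw [abs_mul, abs_of_pos (by positivity : 0 < r/2)]
  refine ⟨r/2 * (A * ((2+t^2)/2) + B * t + C * (t^2/(2+t^2))), B + C * (2*t/(2+t^2)),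
    -(C * (r/(2+t^2))), ?_, ?_, ?_, ?_, ?_⟩
  · rw [hrX]
    nlinarith
  · rw [hrX]
    nlinarith
  · have := abs_add_le B (C * (2*t/(2+t^2)))
    linarith
  · rw [abs_neg]; linarith
  · have hri : ∀ x : ℝ, x / r = x * r / 2 := by
      intro x
      rw [div_eq_div_iff hr0.ne' (by norm_num)]
      linear_combination (-x) * hr2
    have hrr : r^2 = 2 := by rw [sq, hr2]
    ext i
    fin_cases i <;> simp [hri] <;> field_simp <;> grind
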